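/- Let A, A' be objects of A and let f₁, f₂ : A → A' be morphisms in K^b(A)/𝔻 presented as f_j = g_j ∘ s_j⁻¹ ∘ i_j, where C_j, C'_j are objects of A, g_j ∈ A(C'_j, A'), s_j ∈ A(C'_j, C_j) with Cone(s_j) ∈ D, and i_j ∈ A(A, C_j). Let T be the two-term complex (A ⊕ C'₁ ⊕ C'₂ → C₁ ⊕ C₂, in degrees 0 and 1) with differential the matrix r with rows (i₁, s₁, 0) and (i₂, 0, s₂). Then f₁ = f₂ if and only if the chain map T → A' whose degree-0 component is (0, g₁, −g₂) admits a factorization, in the category C^b(A) of bounded complexes (not up to homotopy), through a complex that is an object of 𝔻. -/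

import Mathlib

open CategoryTheory Limits Pretriangulated ZeroObject

universe v u v' u'

section TriangulatedPrelude

variable {C : Type u} [Category.{v} C] [HasZeroObject C] [HasShift C ℤ] [Preadditive C]
  [∀ n : ℤ, (shiftFunctor C n).Additive] [Pretriangulated C]

/-- The objects of the smallest strict full triangulated subcategory of `C`
containing the set of objects `B`. -/
inductive genSub (B : Set C) : C → Prop
  | of (X : C) (hX : X ∈ B) : genSub B X
  | zero (X : C) (hX : IsZero X) : genSub B X
  | shift (X : C) (n : ℤ) (hX : genSub B X) : genSub B (X⟦n⟧)
  | ext₂ (T : Triangle C) (hT : T ∈ distTriang C) (h₁ : genSub B T.obj₁)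
      (h₃ : genSub B T.obj₃) : genSub B T.obj₂

/-- The triangulated subcategory of `C` generated by `B`. -/
def genSubcat (B : Set C) : ObjectProperty C :=
  genSub B

instance (B : Set C) : (genSubcat B).IsTriangulated where
  exists_zero := ⟨0, isZero_zero _, genSub.zero _ (isZero_zero _)⟩
  isStableUnderShiftBy n := ⟨fun X h => genSub.shift X n h⟩
  ext₂' T hT h₁ h₃ := ObjectProperty.le_isoClosure _ _ (genSub.ext₂ T hT h₁ h₃)

/-- The extension-closure of a class of objects `E`: the smallest class containing `E`
and `0` and such that for any distinguished triangle `X ⟶ Y ⟶ Z` with `X, Z` in the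
class, `Y` is also in the class. -/
inductive extClosure (E : Set C) : C → Prop
  | of (X : C) (hX : X ∈ E) : extClosure E X
  | zero (X : C) (hX : IsZero X) : extClosure E X
  | ext₂ (T : Triangle C) (hT : T ∈ distTriang C) (h₁ : extClosure E T.obj₁)
      (h₃ : extClosure E T.obj₃) : extClosure E T.obj₂

/-- `D_{[i,j]}`: the extension-closure of `∪_{i ≤ l ≤ j} D[l]`. -/
def shiftClosure (D : Set C) (i j : ℤ) : Set C :=
  extClosure {X | ∃ (Y : C) (l : ℤ), i ≤ l ∧ l ≤ j ∧ Y ∈ D ∧ X = Y⟦l⟧}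

/-- `D_{≥ i} = ∪_{k ≥ i} D_{[i,k]}`. -/
def shiftClosureGE (D : Set C) (i : ℤ) : Set C := {X | ∃ k, i ≤ k ∧ X ∈ shiftClosure D i k}

/-- `D_{≤ j} = ∪_{k ≤ j} D_{[k,j]}`. -/
def shiftClosureLE (D : Set C) (j : ℤ) : Set C := {X | ∃ k, k ≤ j ∧ X ∈ shiftClosure D k j}

/-- A set of objects `D` is weakly negative if `0 ∈ D` and `Hom(X, Y[i]) = 0`
for all `X, Y ∈ D` and all `i ≥ 2`. -/
def WeaklyNegative (D : Set C) : Prop :=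
  (0 : C) ∈ D ∧ ∀ X ∈ D, ∀ Y ∈ D, ∀ i : ℤ, 2 ≤ i → ∀ f : X ⟶ (Y⟦i⟧), f = 0

end TriangulatedPrelude

attribute [local instance] Limits.hasBinaryBiproducts_of_finite_biproducts

section KPrelude

variable {A : Type u} [Category.{v} A] [Preadditive A] [HasZeroObject A] [HasFiniteBiproducts A]

/-- The two-term cochain complex with `P` in degree `n` and `Q` in degree `n + 1`,
with differential given by `f : P ⟶ Q` (and all other terms `0`).
In particular, `twoComplex (-1) f` is the cone of a morphism `f` of `A`. -/
noncomputable def twoComplex (n : ℤ) {P Q : A} (f : P ⟶ Q) : CochainComplex A ℤ where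
  X i := if i = n then P else if i = n + 1 then Q else 0
  d i j :=
    if hij : i = n ∧ j = n + 1 then
      eqToHom (by simp [hij.1]) ≫ f ≫
        eqToHom (by simp [hij.2, show ¬ ((n : ℤ) + 1 = n) by omega])
    else 0
  shape i j hij := by
    rw [dif_neg]
    rintro ⟨rfl, rfl⟩
    exact hij rfl
  d_comp_d' i j k _ _ := by
    by_cases h1 : i = n ∧ j = n + 1
    · by_cases h2 : j = n ∧ k = n + 1
      · obtain ⟨h1a, h1b⟩ := h1; obtain ⟨h2a, h2b⟩ := h2; omega
      · rw [dif_neg h2, comp_zero]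
    · rw [dif_neg h1, zero_comp]

/-- The chain map from the two-term complex (in degrees `n`, `n + 1`) determined by
`f : P ⟶ Q` to the complex concentrated in degree `n` with value `M`, whose degree `n`
component is `g : P ⟶ M`. -/
noncomputable def twoComplexToSingle (n : ℤ) {P Q M : A} (f : P ⟶ Q) (g : P ⟶ M) :
    twoComplex n f ⟶ (HomologicalComplex.single A (ComplexShape.up ℤ) n).obj M where
  f i :=
    if h : i = n then
      eqToHom (by simp [twoComplex, h]) ≫ g ≫
        (HomologicalComplex.singleObjXSelf (ComplexShape.up ℤ) n M).inv ≫ eqToHom (by rw [h])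
    else 0
  comm' i j hij := by
    simp only [ComplexShape.up_Rel] at hij
    by_cases hj : j = n
    · have hi : ¬ (i = n ∧ j = n + 1) := by rintro ⟨rfl, rfl⟩; omega
      have hd : (twoComplex n f).d i j = 0 := by
        dsimp [twoComplex]; rw [dif_neg hi]; rfl
      rw [hd, zero_comp]
      have : i ≠ n := by omega
      rw [dif_neg this, zero_comp]
    · rw [dif_neg hj]
      rw [comp_zero]
      have : ((HomologicalComplex.single A (ComplexShape.up ℤ) n).obj M).d i j = 0 := by simp
      rw [this, comp_zero]

/-- The quotient functor `C^b(A) ⥤ K(A)` (restricted from all complexes). -/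
noncomputable abbrev homotopyQ : CochainComplex A ℤ ⥤ HomotopyCategory A (ComplexShape.up ℤ) :=
  HomotopyCategory.quotient A (ComplexShape.up ℤ)

/-- The canonical embedding of `A` into the homotopy category, as complexes concentrated
in degree `0`. -/
noncomputable abbrev iotaA : A ⥤ HomotopyCategory A (ComplexShape.up ℤ) :=
  HomologicalComplex.single A (ComplexShape.up ℤ) 0 ⋙ homotopyQ

/-- `B`: the set of cones of elements of `S`, viewed in the homotopy category. -/
def coneSet (S : MorphismProperty A) : Set (HomotopyCategory A (ComplexShape.up ℤ)) :=
  {X | ∃ (P Q : A) (s : P ⟶ Q), S s ∧ X = homotopyQ.obj (twoComplex (-1) s)}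

/-- The Verdier localization functor of the homotopy category by the triangulated
subcategory `𝔻` generated by the cones of elements of `S`. -/
noncomputable abbrev locQ (S : MorphismProperty A) :
    HomotopyCategory A (ComplexShape.up ℤ) ⥤ (genSubcat (coneSet S)).trW.Localization :=
  (genSubcat (coneSet S)).trW.Q

/-- The composite functor `A ⥤ K(A) ⥤ K(A)/𝔻`. -/
noncomputable abbrev uBig (S : MorphismProperty A) :
    A ⥤ (genSubcat (coneSet S)).trW.Localization :=
  iotaA ⋙ locQ S

/-- `A[S⁻¹]_add`: the full subcategory of the Verdier quotient whose
objects are those of `A` (viewed as complexes concentrated in degree `0`). -/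
def AddLoc (S : MorphismProperty A) : Type u := A

noncomputable instance (S : MorphismProperty A) : Category (AddLoc S) where
  Hom X Y := (uBig S).obj X ⟶ (uBig S).obj Y
  id X := 𝟙 ((uBig S).obj X)
  comp {X Y Z} f g :=
    @CategoryStruct.comp _ _ ((uBig S).obj X) ((uBig S).obj Y) ((uBig S).obj Z) f g

/-- The canonical functor `u : A ⥤ A[S⁻¹]_add` induced by the localization functor. -/
noncomputable def uFun (S : MorphismProperty A) : A ⥤ AddLoc S where
  obj X := X
  map f := (uBig S).map f
  map_id X := (uBig S).map_id X
  map_comp f g := (uBig S).map_comp f g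

noncomputable instance (S : MorphismProperty A) : Preadditive (AddLoc S) where
  homGroup X Y := inferInstanceAs (AddCommGroup ((uBig S).obj X ⟶ (uBig S).obj Y))
  add_comp P Q R f f' g :=
    @Preadditive.add_comp _ _ _ ((uBig S).obj P) ((uBig S).obj Q) ((uBig S).obj R) f f' g
  comp_add P Q R f g g' :=
    @Preadditive.comp_add _ _ _ ((uBig S).obj P) ((uBig S).obj Q) ((uBig S).obj R) f g g'

end KPrelude

/-- The matrix morphism `r` with rows `(i₁, s₁, 0)` and `(i₂, 0, s₂)`. -/
noncomputable def matrixR {A : Type u} [Category.{v} A] [Preadditive A] [HasZeroObject A]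
    [HasFiniteBiproducts A]
    {A₀ C₁ C'₁ C₂ C'₂ : A}
    (s₁ : C'₁ ⟶ C₁) (i₁ : A₀ ⟶ C₁) (s₂ : C'₂ ⟶ C₂) (i₂ : A₀ ⟶ C₂) :
    (A₀ ⊞ (C'₁ ⊞ C'₂) : A) ⟶ (C₁ ⊞ C₂ : A) :=
  biprod.desc (biprod.lift i₁ i₂)
    (biprod.desc (biprod.lift s₁ 0) (biprod.lift 0 s₂))

section Helpers15

variable {A : Type u} [Category.{v} A] [Preadditive A] [HasZeroObject A] [HasFiniteBiproducts A]

lemma genSub_iso15 {C : Type u} [Category.{v} C] [HasZeroObject C] [HasShift C ℤ] [Preadditive C]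
    [∀ n : ℤ, (shiftFunctor C n).Additive] [Pretriangulated C] (B : Set C) {X Y : C}
    (e : X ≅ Y) (h : genSub B X) : genSub B Y :=
  genSub.ext₂ (Triangle.mk e.hom (0 : Y ⟶ 0) 0)
    (isomorphic_distinguished _ (contractible_distinguished X) _
      (Triangle.isoMk _ _ (Iso.refl _) e.symm (Iso.refl _)
        (e.hom_inv_id.trans (Category.comp_id _).symm)
        (zero_comp.trans comp_zero.symm) (zero_comp.trans comp_zero.symm)))
    h (genSub.zero _ (isZero_zero _))

lemma null_from_single15 {P : A} {Y : CochainComplex A ℤ}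
    (f : (HomologicalComplex.single A (ComplexShape.up ℤ) 0).obj P ⟶ Y)
    (h : ((HomologicalComplex.single A (ComplexShape.up ℤ) 0).obj P).X 0 ⟶ Y.X (-1))
    (hf : f.f 0 = h ≫ Y.d (-1) 0) : homotopyQ.map f = 0 := by
  let H : ∀ i j, (ComplexShape.up ℤ).Rel j i →
      (((HomologicalComplex.single A (ComplexShape.up ℤ) 0).obj P).X i ⟶ Y.X j) :=
    fun i j hij => if hi : i = 0 then
      eqToHom (by rw [hi]) ≫ h ≫ eqToHom (by
        have : j = -1 := by simp at hij; omega
        rw [this]) else 0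
  have : f = Homotopy.nullHomotopicMap' H := by
    apply HomologicalComplex.from_single_hom_ext
    rw [Homotopy.nullHomotopicMap'_f (k₂ := -1) (k₁ := 0) (k₀ := 1) (by simp) (by simp), hf]
    simp [H]
  rw [this]
  have := HomotopyCategory.eq_of_homotopy _ _ (Homotopy.nullHomotopy' H)
  rw [this]; exact Functor.map_zero _ _ _

lemma null_to_single15 {P : A} {Y : CochainComplex A ℤ}
    (f : Y ⟶ (HomologicalComplex.single A (ComplexShape.up ℤ) 0).obj P)
    (h : Y.X 1 ⟶ ((HomologicalComplex.single A (ComplexShape.up ℤ) 0).obj P).X 0)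
    (hf : f.f 0 = Y.d 0 1 ≫ h) : homotopyQ.map f = 0 := by
  let H : ∀ i j, (ComplexShape.up ℤ).Rel j i →
      (Y.X i ⟶ ((HomologicalComplex.single A (ComplexShape.up ℤ) 0).obj P).X j) :=
    fun i j hij => if hi : i = 1 then
      eqToHom (by rw [hi]) ≫ h ≫ eqToHom (by
        have : j = 0 := by simp at hij; omega
        rw [this]) else 0
  have : f = Homotopy.nullHomotopicMap' H := by
    apply HomologicalComplex.to_single_hom_ext
    rw [Homotopy.nullHomotopicMap'_f (k₂ := -1) (k₁ := 0) (k₀ := 1) (by simp) (by simp), hf]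
    simp [H]
  rw [this]
  have := HomotopyCategory.eq_of_homotopy _ _ (Homotopy.nullHomotopy' H)
  rw [this]; exact Functor.map_zero _ _ _

/-- strictify a factorization up to homotopy -/
lemma strictify15 (S : MorphismProperty A) {T T' M : CochainComplex A ℤ} (φ : T ⟶ M)
    (hT' : genSub (coneSet S) (homotopyQ.obj T')) (a : T ⟶ T') (b : T' ⟶ M)
    (h : homotopyQ.map (a ≫ b) = homotopyQ.map φ) :
    ∃ T' : CochainComplex A ℤ, genSub (coneSet S) (homotopyQ.obj T') ∧
      ∃ (a : T ⟶ T') (b : T' ⟶ M), a ≫ b = φ := by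
  have hz : homotopyQ.map (φ - a ≫ b) = 0 := by rw [Functor.map_sub, h, sub_self]
  have ho : Homotopy (φ - a ≫ b) 0 :=
    HomotopyCategory.homotopyOfEq _ _ (by rw [hz]; exact (Functor.map_zero _ _ _).symm)
  obtain ⟨α, hα⟩ := (CochainComplex.HomComplex.Cochain.equivHomotopy _ _) ho
  let d := CochainComplex.mappingCone.desc (𝟙 T) α (φ - a ≫ b) (by
    rw [Category.id_comp, hα]; simp)
  refine ⟨T' ⊞ CochainComplex.mappingCone (𝟙 T), ?_,
    biprod.lift a (CochainComplex.mappingCone.inr (𝟙 T)), biprod.desc b d, ?_⟩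
  · have := preservesBinaryBiproducts_of_preservesBiproducts (homotopyQ (A := A))
    refine genSub_iso15 _ ((homotopyQ.mapBiprod _ _).symm) ?_
    refine genSub.ext₂ _ (binaryBiproductTriangle_distinguished _ _) hT' (genSub.zero _ ?_)
    have := HomotopyCategory.mappingCone_triangleh_distinguished (𝟙 T)
    have hi : IsIso (CochainComplex.mappingCone.triangleh (𝟙 T)).mor₁ :=
      inferInstanceAs (IsIso (homotopyQ.map (𝟙 T)))
    have hz3 : IsZero (CochainComplex.mappingCone.triangleh (𝟙 T)).obj₃ :=
      Triangle.isZero₃_of_isIso₁ _ this hi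
    exact hz3
  · simp [d]

lemma isZero_loc15 (S : MorphismProperty A) {Z} (h : genSub (coneSet S) Z) :
    IsZero ((locQ S).obj Z) := by
  have : (genSubcat (coneSet S)).trW (contractibleTriangle Z).mor₂ :=
    ObjectProperty.trW.mk' _ (contractible_distinguished Z) h
  have : IsIso ((locQ S).map (contractibleTriangle Z).mor₂) :=
    Localization.inverts (locQ S) (genSubcat (coneSet S)).trW _ this
  exact IsZero.of_iso ((locQ S).map_isZero (isZero_zero _)) 
    (@asIso _ _ _ _ ((locQ S).map (contractibleTriangle Z).mor₂) this)

lemma zero_loc_iff15 (S : MorphismProperty A) {X Y : HomotopyCategory A (ComplexShape.up ℤ)}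
    (f : X ⟶ Y) (hf : (locQ S).map f = 0) :
    ∃ (Z : _) (_ : genSub (coneSet S) Z) (a : X ⟶ Z) (b : Z ⟶ Y), a ≫ b = f := by
  rw [← (locQ S).map_zero, MorphismProperty.map_eq_iff_postcomp _ (genSubcat (coneSet S)).trW] at hf
  obtain ⟨W, s, hs, hf⟩ := hf
  rw [ObjectProperty.trW_iff'] at hs
  obtain ⟨Z, a, b, hT, hZ⟩ := hs
  obtain ⟨c, hc⟩ := Triangle.coyoneda_exact₂ _ hT f (hf.trans zero_comp)
  exact ⟨Z, hZ, c, a, hc.symm⟩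

variable {P Q : A} (r : P ⟶ Q)

/-- degree zero term -/
noncomputable def e0iso15 : (twoComplex 0 r).X 0 ≅ P := eqToIso (by simp [twoComplex])

/-- degree one term -/
noncomputable def e1iso15 : (twoComplex 0 r).X 1 ≅ Q := eqToIso (by simp [twoComplex])

lemma two_d15 : (twoComplex 0 r).d 0 1 = (e0iso15 r).hom ≫ r ≫ (e1iso15 r).inv := by
  unfold e0iso15 e1iso15
  dsimp only [twoComplex]
  rw [dif_pos ⟨rfl, rfl⟩]
  rfl

lemma two_d15' : (twoComplex 0 r).d 1 2 = 0 := by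
  dsimp only [twoComplex]
  exact dif_neg (by simp)

lemma two_f15 {M : A} (g : P ⟶ M) : (twoComplexToSingle 0 r g).f 0 =
    (e0iso15 r).hom ≫ g ≫ (HomologicalComplex.singleObjXSelf (ComplexShape.up ℤ) 0 M).inv := by
  unfold e0iso15
  dsimp only [twoComplexToSingle]
  rw [dif_pos rfl, eqToHom_refl, Category.comp_id]
  rfl

lemma iota_r15 : homotopyQ.map (twoComplexToSingle 0 r (𝟙 P)) ≫ iotaA.map r = 0 := by
  dsimp only [Functor.comp_map]
  rw [← Functor.map_comp]
  refine null_to_single15 _ ((e1iso15 r).hom ≫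
      (HomologicalComplex.singleObjXSelf (ComplexShape.up ℤ) 0 Q).inv) ?_
  rw [HomologicalComplex.comp_f, two_f15, two_d15, HomologicalComplex.single_map_f_self]
  simp

lemma toSingle_eq15 {M : A} (g : P ⟶ M) : twoComplexToSingle 0 r g =
    twoComplexToSingle 0 r (𝟙 P) ≫ (HomologicalComplex.single A (ComplexShape.up ℤ) 0).map g := by
  apply HomologicalComplex.to_single_hom_ext
  rw [HomologicalComplex.comp_f, two_f15, two_f15, HomologicalComplex.single_map_f_self]
  simp

open CochainComplex in
lemma exists_k15 : ∃ k : iotaA.obj Q ⟶ homotopyQ.obj (mappingCone (twoComplexToSingle 0 r (𝟙 P))),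
    iotaA.map r ≫ k = homotopyQ.map (mappingCone.inr (twoComplexToSingle 0 r (𝟙 P))) := by
  have h0 := two_f15 r (𝟙 P)
  have h1 : (twoComplexToSingle 0 r (𝟙 P)).f 1 = 0 := by simp [twoComplexToSingle]
  generalize twoComplexToSingle 0 r (𝟙 P) = ι at *
  have hk : ∀ (k : ℤ), (ComplexShape.up ℤ).Rel 0 k →
      ((e1iso15 r).inv ≫ (mappingCone.inl ι).v 1 0 (by simp)) ≫ (mappingCone ι).d 0 k = 0 := by
    intro k hk
    obtain rfl : k = 1 := by simpa using hk.symm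
    rw [Category.assoc, mappingCone.inl_v_d ι 1 0 2 (by simp) (by simp), h1, two_d15']
    simp
  refine ⟨homotopyQ.map (HomologicalComplex.mkHomFromSingle _ hk), ?_⟩
  dsimp only [Functor.comp_map]
  rw [← Functor.map_comp, eq_comm, ← sub_eq_zero, ← Functor.map_sub]
  refine null_from_single15 _
    ((HomologicalComplex.singleObjXSelf (ComplexShape.up ℤ) 0 P).hom ≫
      (e0iso15 r).inv ≫ (mappingCone.inl ι).v 0 (-1) (by simp)) ?_
  simp only [Category.assoc]
  rw [mappingCone.inl_v_d ι 0 (-1) 1 (by simp) (by simp), h0, two_d15,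
    HomologicalComplex.sub_f_apply, HomologicalComplex.comp_f,
    HomologicalComplex.single_map_f_self, HomologicalComplex.mkHomFromSingle_f]
  simp

lemma factor15 (S : MorphismProperty A) {M} (g : (uBig S).obj P ⟶ M)
    (hg : (locQ S).map (homotopyQ.map (twoComplexToSingle 0 r (𝟙 P))) ≫ g = 0) :
    ∃ h : (uBig S).obj Q ⟶ M, g = (uBig S).map r ≫ h := by
  obtain ⟨k, hk⟩ := exists_k15 r
  have hT := (locQ S).map_distinguished _
    (HomotopyCategory.mappingCone_triangleh_distinguished (twoComplexToSingle 0 r (𝟙 P)))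
  obtain ⟨h, hh⟩ := Triangle.yoneda_exact₂ _ hT g hg
  refine ⟨(locQ S).map k ≫ h, ?_⟩
  have e : (uBig S).map r ≫ (locQ S).map k = (locQ S).map
      (homotopyQ.map (CochainComplex.mappingCone.inr (twoComplexToSingle 0 r (𝟙 P)))) :=
    ((locQ S).map_comp _ _).symm.trans (congrArg (locQ S).map hk)
  exact hh.trans ((congrArg (· ≫ h) e.symm).trans (Category.assoc _ _ _))

end Helpers15

/-- Proposition: equality criterion for two morphisms of `K^b(A)/𝔻` presented in the
form `g_j ∘ s_j⁻¹ ∘ i_j`: they are equal if and only if the chain map with degree zero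
component `(0, g₁, −g₂)` out of the two-term complex `T` with differential `r` factors,
in the category of bounded complexes (with actual chain maps), through a complex that is
an object of `𝔻`. -/
theorem statement15 {A : Type u} [Category.{v} A] [Preadditive A] [HasZeroObject A]
    [HasFiniteBiproducts A] (S : MorphismProperty A)
    (A₀ A' C₁ C'₁ C₂ C'₂ : A)
    (g₁ : C'₁ ⟶ A') (s₁ : C'₁ ⟶ C₁) (i₁ : A₀ ⟶ C₁)
    (g₂ : C'₂ ⟶ A') (s₂ : C'₂ ⟶ C₂) (i₂ : A₀ ⟶ C₂)
    (hD₁ : extClosure (coneSet S) (homotopyQ.obj (twoComplex (-1) s₁)))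
    (hD₂ : extClosure (coneSet S) (homotopyQ.obj (twoComplex (-1) s₂)))
    [IsIso ((uBig S).map s₁)] [IsIso ((uBig S).map s₂)]
    (f₁ f₂ : (uBig S).obj A₀ ⟶ (uBig S).obj A')
    (hf₁ : f₁ = (uBig S).map i₁ ≫ inv ((uBig S).map s₁) ≫ (uBig S).map g₁)
    (hf₂ : f₂ = (uBig S).map i₂ ≫ inv ((uBig S).map s₂) ≫ (uBig S).map g₂) :
    f₁ = f₂ ↔
      ∃ T' : CochainComplex A ℤ,
        genSub (coneSet S) (homotopyQ.obj T') ∧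
        ∃ (a : twoComplex 0 (matrixR s₁ i₁ s₂ i₂) ⟶ T')
          (b : T' ⟶ (HomologicalComplex.single A (ComplexShape.up ℤ) 0).obj A'),
          a ≫ b = twoComplexToSingle 0 (matrixR s₁ i₁ s₂ i₂)
            (biprod.desc 0 (biprod.desc g₁ (-g₂))) := by
  have hinj : ∀ {X Y Z : A} (a b : X ⊞ Y ⟶ Z), biprod.inl ≫ a = biprod.inl ≫ b →
      biprod.inr ≫ a = biprod.inr ≫ b → a = b := fun a b h h' => biprod.hom_ext' _ _ h h'
  set r := matrixR s₁ i₁ s₂ i₂ with hr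
  set g : A₀ ⊞ (C'₁ ⊞ C'₂) ⟶ A' := biprod.desc 0 (biprod.desc g₁ (-g₂)) with hg
  let F := uBig S
  have hadd : F.Additive := inferInstance
  -- the key criterion
  have key : f₁ = f₂ ↔ ∃ h : F.obj (C₁ ⊞ C₂) ⟶ F.obj A', F.map g = F.map r ≫ h := by
    constructor
    · intro h12
      refine ⟨F.map biprod.fst ≫ inv (F.map s₁) ≫ F.map g₁ -
        F.map biprod.snd ≫ inv (F.map s₂) ≫ F.map g₂, ?_⟩
      have e1 : r ≫ biprod.fst = biprod.fst ≫ i₁ + biprod.snd ≫ biprod.fst ≫ s₁ := by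
        apply biprod.hom_ext'
        · simp [hr, matrixR]
        · apply biprod.hom_ext' <;> simp [hr, matrixR]
      have e2 : r ≫ biprod.snd = biprod.fst ≫ i₂ + biprod.snd ≫ biprod.snd ≫ s₂ := by
        apply biprod.hom_ext'
        · simp [hr, matrixR]
        · apply biprod.hom_ext' <;> simp [hr, matrixR]
      have e3 : g = biprod.snd ≫ biprod.fst ≫ g₁ - biprod.snd ≫ biprod.snd ≫ g₂ := by
        apply biprod.hom_ext'
        · simp [hg]
        · apply biprod.hom_ext' <;> simp [hg]
      have e4 : F.map i₁ ≫ inv (F.map s₁) ≫ F.map g₁ = F.map i₂ ≫ inv (F.map s₂) ≫ F.map g₂ :=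
        hf₁.symm.trans (h12.trans hf₂)
      have E1 : F.map r ≫ F.map biprod.fst = F.map biprod.fst ≫ F.map i₁ +
          F.map biprod.snd ≫ F.map biprod.fst ≫ F.map s₁ := by
        rw [← F.map_comp, e1, F.map_add]; simp only [F.map_comp]
      have E2 : F.map r ≫ F.map biprod.snd = F.map biprod.fst ≫ F.map i₂ +
          F.map biprod.snd ≫ F.map biprod.snd ≫ F.map s₂ := by
        rw [← F.map_comp, e2, F.map_add]; simp only [F.map_comp]
      have E3 : F.map g = F.map biprod.snd ≫ F.map biprod.fst ≫ F.map g₁ -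
          F.map biprod.snd ≫ F.map biprod.snd ≫ F.map g₂ := by
        rw [e3, F.map_sub]; simp only [F.map_comp]
      rw [Preadditive.comp_sub, ← Category.assoc (F.map r), E1, ← Category.assoc (F.map r), E2, E3,
        Preadditive.add_comp, Preadditive.add_comp]
      simp only [Category.assoc]
      rw [e4]
      simp
    · rintro ⟨h, hh⟩
      have E : ∀ {X : A} (x : X ⟶ A₀ ⊞ (C'₁ ⊞ C'₂)), F.map (x ≫ g) = F.map (x ≫ r) ≫ h := by
        intro X x
        rw [F.map_comp, hh, F.map_comp, Category.assoc]
      have x0 : biprod.inl ≫ r = i₁ ≫ biprod.inl + i₂ ≫ biprod.inr := by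
        apply biprod.hom_ext <;> simp [hr, matrixR]
      have x1 : (biprod.inl ≫ biprod.inr) ≫ r = s₁ ≫ biprod.inl := by
        apply biprod.hom_ext <;> simp [hr, matrixR]
      have x2 : (biprod.inr ≫ biprod.inr) ≫ r = s₂ ≫ biprod.inr := by
        apply biprod.hom_ext <;> simp [hr, matrixR]
      have E0 := E biprod.inl
      have E1 := E (biprod.inl ≫ biprod.inr)
      have E2 := E (biprod.inr ≫ biprod.inr)
      rw [x0, show biprod.inl ≫ g = 0 by simp [hg], F.map_zero, F.map_add, Preadditive.add_comp,
        F.map_comp, F.map_comp, Category.assoc, Category.assoc] at E0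
      rw [x1, show (biprod.inl ≫ biprod.inr) ≫ g = g₁ by simp [hg], F.map_comp,
        Category.assoc] at E1
      rw [x2, show (biprod.inr ≫ biprod.inr) ≫ g = -g₂ by simp [hg], F.map_comp,
        Category.assoc, F.map_neg] at E2
      have E2' : F.map g₂ = -(F.map s₂ ≫ F.map biprod.inr ≫ h) := by rw [← E2, neg_neg]
      have y1 : f₁ = F.map i₁ ≫ F.map biprod.inl ≫ h := by
        refine hf₁.trans ?_
        change F.map i₁ ≫ inv (F.map s₁) ≫ F.map g₁ = _
        rw [E1, IsIso.inv_hom_id_assoc]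
      have y2 : f₂ = -(F.map i₂ ≫ F.map biprod.inr ≫ h) := by
        refine hf₂.trans ?_
        change F.map i₂ ≫ inv (F.map s₂) ≫ F.map g₂ = _
        rw [E2', Preadditive.comp_neg, IsIso.inv_hom_id_assoc, Preadditive.comp_neg]
      rw [y1, y2]
      exact eq_neg_of_add_eq_zero_left E0.symm
  have hφ : homotopyQ.map (twoComplexToSingle 0 r g) =
      homotopyQ.map (twoComplexToSingle 0 r (𝟙 _)) ≫ iotaA.map g := by
    rw [toSingle_eq15 r g]; exact homotopyQ.map_comp _ _
  rw [key]
  constructor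
  · rintro ⟨h, hh⟩
    have hz : (locQ S).map (homotopyQ.map (twoComplexToSingle 0 r g)) = 0 := by
      rw [hφ, Functor.map_comp]
      change _ ≫ F.map g = 0
      rw [hh]
      change _ ≫ (locQ S).map (iotaA.map r) ≫ h = 0
      rw [← Category.assoc, ← Functor.map_comp, iota_r15, Functor.map_zero, zero_comp]
    obtain ⟨Z, hZ, a, b, hab⟩ := zero_loc_iff15 S _ hz
    obtain ⟨Z', rfl⟩ := HomotopyCategory.quotient_obj_surjective Z
    obtain ⟨a', rfl⟩ := homotopyQ.map_surjective a
    obtain ⟨b', rfl⟩ := homotopyQ.map_surjective b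
    exact strictify15 S _ hZ a' b' ((homotopyQ.map_comp _ _).trans hab)
  · rintro ⟨T', hT', a, b, hab⟩
    apply factor15 r S
    have hz : (locQ S).map (homotopyQ.map (twoComplexToSingle 0 r g)) = 0 := by
      rw [← hab, Functor.map_comp, Functor.map_comp]
      exact (isZero_loc15 S hT').eq_zero_of_tgt ((locQ S).map (homotopyQ.map a)) ▸ zero_comp
    rw [hφ, Functor.map_comp] at hz
    exact hz
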